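/- Let E be an ordered Polish space and P a monotone Markov kernel on E such that the set M = {(x,y) : x ⪯ y} is achievable, and assume there exists a stationary distribution π for P. If for some x ∈ E the family of laws of Xₙˣ, n ≥ 0, is tight, then these laws converge weakly to π (even if E is not normal). -/

import Mathlib

open MeasureTheory ProbabilityTheory Filter Topology

/-- `μ` is *stochastically smaller* than `ν` (written `μ ⪯ ν` in the paper):
`μ I ≤ ν I` for every Borel increasing (upper) set `I`. -/
def StochDom {E : Type*} [MeasurableSpace E] [Preorder E] (μ ν : Measure E) : Prop :=
  ∀ I : Set E, MeasurableSet I → IsUpperSet I → μ I ≤ ν I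

/-- A Markov kernel `P` is *(stochastically) monotone* if for every bounded monotone
measurable `g : E → [0,1]` the map `x ↦ ∫ g dP(x)` is again monotone. -/
def MonotoneKernel {E : Type*} [MeasurableSpace E] [Preorder E] (P : Kernel E E) : Prop :=
  ∀ g : E → ℝ, Measurable g → Monotone g → (∀ x, g x ∈ Set.Icc (0 : ℝ) 1) →
    Monotone fun x => ∫ y, g y ∂(P x)

/-- The `n`-step transition kernel `P⁽ⁿ⁾` of a Markov kernel `P`;
`kpow P n x` is the law of `Xₙˣ`, the chain with kernel `P` started at `x`. -/
noncomputable def kpow {E : Type*} [MeasurableSpace E] (P : Kernel E E) : ℕ → Kernel E E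
  | 0 => Kernel.id
  | n + 1 => P.comp (kpow P n)

/-- The process `Z` on `(Ω, μ)` is a (possibly time-inhomogeneous) Markov chain with
one-step kernels `Q n`, expressed through finite-dimensional distributions: for every
bounded measurable cylinder functional `φ` of the past and every Borel set `A`,
`E[φ(Z₀,…,Zₙ) · 1_A(Z_{n+1})] = E[φ(Z₀,…,Zₙ) · (Q n)(Zₙ, A)]`. -/
def MCStep {Ω S : Type*} [MeasurableSpace Ω] [MeasurableSpace S]
    (μ : Measure Ω) (Q : ℕ → Kernel S S) (Z : ℕ → Ω → S) : Prop :=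
  ∀ (n : ℕ) (A : Set S), MeasurableSet A →
    ∀ φ : (Fin (n + 1) → S) → ℝ, Measurable φ → (∀ v, φ v ∈ Set.Icc (0 : ℝ) 1) →
      ∫ ω, φ (fun i => Z i.1 ω) * A.indicator (fun _ => (1 : ℝ)) (Z (n + 1) ω) ∂μ
        = ∫ ω, φ (fun i => Z i.1 ω) * ((Q n) (Z n ω) A).toReal ∂μ

/-- `X` on `(Ω, μ)` is a time-homogeneous Markov chain with kernel `P` started at `x`. -/
def IsMChain {E Ω : Type*} [MeasurableSpace E] [MeasurableSpace Ω]
    (P : Kernel E E) (x : E) (μ : Measure Ω) (X : ℕ → Ω → E) : Prop :=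
  IsProbabilityMeasure μ ∧ (∀ n, Measurable (X n)) ∧ (∀ᵐ ω ∂μ, X 0 ω = x) ∧
    MCStep μ (fun _ => P) X

/-- A *Markovian coupling* of two chains with kernel `P` started at `x` and `y`:
both coordinates are Markov chains with kernel `P` and the pair process is itself a
(possibly time-inhomogeneous) Markov chain. -/
def IsMarkovianCoupling {E Ω : Type*} [MeasurableSpace E] [MeasurableSpace Ω]
    (P : Kernel E E) (x y : E) (μ : Measure Ω) (X Y : ℕ → Ω → E) : Prop :=
  IsMChain P x μ X ∧ IsMChain P y μ Y ∧
    ∃ Q : ℕ → Kernel (E × E) (E × E), (∀ n, IsMarkovKernel (Q n)) ∧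
      MCStep μ Q fun n ω => (X n ω, Y n ω)

/-- A set `H ⊆ E × E` is *achievable* for the kernel `P` if for all `x, y` there is a
Markovian coupling of the chains started at `x` and `y` whose hitting time of `H`
is finite almost surely. -/
def Achievable {E : Type*} [MeasurableSpace E] (P : Kernel E E) (H : Set (E × E)) : Prop :=
  ∀ x y : E, ∃ (Ω : Type) (_ : MeasurableSpace Ω) (μ : Measure Ω) (X Y : ℕ → Ω → E),
    IsMarkovianCoupling P x y μ X Y ∧ ∀ᵐ ω ∂μ, ∃ n, (X n ω, Y n ω) ∈ H

/-- Condition (BMC): every increasing sequence bounded above by some element converges. -/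
def BMC (E : Type*) [Preorder E] [TopologicalSpace E] : Prop :=
  ∀ (x : ℕ → E) (y : E), Monotone x → (∀ n, x n ≤ y) → ∃ l, Tendsto x atTop (nhds l)

/-- The ordered metric space `E` is *normal*: there is a continuous `h : [0,∞) → [0,∞)`
with `h 0 = 0` such that `x ⪯ y ⪯ z` implies `d(x,y) ≤ h (d(x,z))`. -/
def NormalOrdered (E : Type*) [PseudoMetricSpace E] [Preorder E] : Prop :=
  ∃ h : ℝ → ℝ, ContinuousOn h (Set.Ici 0) ∧ h 0 = 0 ∧ (∀ t ≥ (0 : ℝ), 0 ≤ h t) ∧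
    ∀ x y z : E, x ≤ y → y ≤ z → dist x y ≤ h (dist x z)

/-- Condition (PR): there are `x₀ ⪯ y₀` such that the hitting times
`ν⁻ = min {n ≥ 1 : Xₙ^{x₀} ⪰ x₀}` and `ν⁺ = min {n ≥ 1 : Xₙ^{y₀} ⪯ y₀}`
have finite expectations. -/
def PRCond {E : Type*} [MeasurableSpace E] [Preorder E] (P : Kernel E E) : Prop :=
  ∃ x₀ y₀ : E, x₀ ≤ y₀ ∧
    (∃ (Ω : Type) (_ : MeasurableSpace Ω) (μ : Measure Ω) (X : ℕ → Ω → E),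
      IsMChain P x₀ μ X ∧ (∀ᵐ ω ∂μ, ∃ n, 1 ≤ n ∧ x₀ ≤ X n ω) ∧
      Integrable (fun ω => ((sInf {n : ℕ | 1 ≤ n ∧ x₀ ≤ X n ω} : ℕ) : ℝ)) μ) ∧
    (∃ (Ω : Type) (_ : MeasurableSpace Ω) (μ : Measure Ω) (X : ℕ → Ω → E),
      IsMChain P y₀ μ X ∧ (∀ᵐ ω ∂μ, ∃ n, 1 ≤ n ∧ X n ω ≤ y₀) ∧
      Integrable (fun ω => ((sInf {n : ℕ | 1 ≤ n ∧ X n ω ≤ y₀} : ℕ) : ℝ)) μ)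

section TopPart

lemma isClosed_up {E : Type*} [TopologicalSpace E] [PartialOrder E] [OrderClosedTopology E]
    {C : Set E} (hC : IsCompact C) : IsClosed {y : E | ∃ c ∈ C, c ≤ y} := by
  have : CompactSpace C := isCompact_iff_compactSpace.mp hC
  have h := isClosedMap_snd_of_compactSpace (X := C) (Y := E)
    {p : C × E | (p.1 : E) ≤ p.2}
    (isClosed_le (by fun_prop) (by fun_prop))
  convert h using 1
  ext y
  simp

lemma isClosed_down {E : Type*} [TopologicalSpace E] [PartialOrder E] [OrderClosedTopology E]
    {C : Set E} (hC : IsCompact C) : IsClosed {y : E | ∃ c ∈ C, y ≤ c} := by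
  have : CompactSpace C := isCompact_iff_compactSpace.mp hC
  have h := isClosedMap_snd_of_compactSpace (X := C) (Y := E)
    {p : C × E | p.2 ≤ (p.1 : E)}
    (isClosed_le (by fun_prop) (by fun_prop))
  convert h using 1
  ext y
  simp

/-- Closed upper sets determine a probability measure. -/
lemma ext_of_closed_upper {E : Type*} [TopologicalSpace E] [PolishSpace E] [MeasurableSpace E]
    [BorelSpace E] [PartialOrder E] [OrderClosedTopology E]
    (μ ν : Measure E) [IsProbabilityMeasure μ] [IsProbabilityMeasure ν]
    (h : ∀ F : Set E, IsClosed F → IsUpperSet F → μ F = ν F) : μ = ν := by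
  classical
  -- a σ-compact set of full measure
  have hK : ∀ n : ℕ, ∃ K : Set E, IsCompact K ∧ (μ + ν) Kᶜ < ((n : ENNReal) + 1)⁻¹ := by
    intro n
    obtain ⟨K, -, hKc, hK⟩ := MeasurableSet.univ.exists_isCompact_sdiff_lt (μ := μ + ν)
      (measure_ne_top _ _) (ε := ((n : ENNReal) + 1)⁻¹) (by simp)
    exact ⟨K, hKc, by rwa [Set.compl_eq_univ_sdiff]⟩
  choose K hKc hKm using hK
  set S : Set E := ⋃ n, K n with hS
  have hSm : MeasurableSet S := MeasurableSet.iUnion fun n => (hKc n).measurableSet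
  have hS0 : (μ + ν) Sᶜ = 0 := by
    have h1 : ∀ n : ℕ, (μ + ν) Sᶜ ≤ ((n : ENNReal) + 1)⁻¹ := fun n =>
      (measure_mono (Set.compl_subset_compl.mpr (Set.subset_iUnion K n))).trans (hKm n).le
    have h2 : Tendsto (fun n : ℕ => ((n : ENNReal) + 1)⁻¹) atTop (𝓝 0) := by
      have := ENNReal.tendsto_inv_nat_nhds_zero.comp (tendsto_add_atTop_nat 1)
      refine this.congr fun n => by simp
    exact le_antisymm (ge_of_tendsto' h2 h1) (zero_le)
  have hμ0 : μ Sᶜ = 0 := by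
    have : μ Sᶜ + ν Sᶜ = 0 := by simpa using hS0
    simp at this; exact this.1
  have hν0 : ν Sᶜ = 0 := by
    have : μ Sᶜ + ν Sᶜ = 0 := by simpa using hS0
    simp at this; exact this.2
  let G : Set (Set S) := {A | ∃ F : Set E, IsClosed F ∧ IsUpperSet F ∧ A = Subtype.val ⁻¹' F}
  have hle : (MeasurableSpace.generateFrom G) ≤ (Subtype.instMeasurableSpace : MeasurableSpace S) := by
    refine MeasurableSpace.generateFrom_le ?_
    rintro A ⟨F, hF, -, rfl⟩
    exact measurable_subtype_coe hF.measurableSet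
  have hsep : @MeasurableSpace.CountablySeparated S (MeasurableSpace.generateFrom G) := by
    refine @MeasurableSpace.CountablySeparated.mk S (MeasurableSpace.generateFrom G) ⟨?_⟩
    let B := TopologicalSpace.countableBasis E
    refine ⟨(fun p : ℕ × Set E => (Subtype.val ⁻¹' {y : E | ∃ c ∈ closure p.2 ∩ K p.1, c ≤ y} : Set S))
      '' (Set.univ ×ˢ B), ?_, ?_, ?_⟩
    · exact (Set.countable_univ.prod (TopologicalSpace.countable_countableBasis E)).image _
    · rintro _ ⟨p, -, rfl⟩
      refine MeasurableSpace.measurableSet_generateFrom ⟨_, isClosed_up ((hKc p.1).inter_left isClosed_closure), ?_, rfl⟩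
      rintro a b hab ⟨c, hc, hca⟩
      exact ⟨c, hc, hca.trans hab⟩
    · have key : ∀ x y : S, (∀ p : ℕ × Set E, p.2 ∈ B →
          ((∃ c ∈ closure p.2 ∩ K p.1, c ≤ (x : E)) → (∃ c ∈ closure p.2 ∩ K p.1, c ≤ (y : E)))) →
          (x : E) ≤ y := by
        intro x y hxy
        by_contra hn
        have ho : IsOpen {p : E × E | p.1 ≤ p.2}ᶜ :=
          (isClosed_le continuous_fst continuous_snd).isOpen_compl
        obtain ⟨U, V, hU, hV, hxU, hyV, hUV⟩ := isOpen_prod_iff.mp ho x y hn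
        obtain ⟨b, hb, hxb, hbU⟩ := (TopologicalSpace.isBasis_countableBasis E).exists_closure_subset
          (hU.mem_nhds hxU)
        obtain ⟨n, hn⟩ := Set.mem_iUnion.mp x.2
        obtain ⟨c, hc, hcy⟩ := hxy (n, b) hb ⟨x, ⟨subset_closure hxb, hn⟩, le_rfl⟩
        exact hUV (Set.mk_mem_prod (hbU hc.1) hyV) hcy
      intro x _ y _ hxy
      have hh : ∀ p : ℕ × Set E, p.2 ∈ B →
          ((∃ c ∈ closure p.2 ∩ K p.1, c ≤ (x : E)) ↔ (∃ c ∈ closure p.2 ∩ K p.1, c ≤ (y : E))) :=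
        fun p hp => hxy _ ⟨p, ⟨Set.mem_univ _, hp⟩, rfl⟩
      exact Subtype.ext (le_antisymm (key x y fun p hp => (hh p hp).1)
        (key y x fun p hp => (hh p hp).2))
  have hsb : StandardBorelSpace S := hSm.standardBorel
  have heq : (Subtype.instMeasurableSpace : MeasurableSpace S) = (MeasurableSpace.generateFrom G) := by
    refine le_antisymm ?_ hle
    intro A hA
    have := @Measurable.measurableEmbedding S S (MeasurableSpace.generateFrom G) id hsep _ hsb
      (measurable_id'' hle) Function.injective_id
    have := @MeasurableEmbedding.measurableSet_image' S S _ (MeasurableSpace.generateFrom G) id this A hA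
    simpa using this
  have hcom : ∀ (ρ : Measure E) (A : Set E), MeasurableSet A → ρ Sᶜ = 0 →
      (ρ.comap (Subtype.val : S → E)) (Subtype.val ⁻¹' A) = ρ A := by
    intro ρ A hA h0
    rw [(MeasurableEmbedding.subtype_coe hSm).comap_apply, Subtype.image_preimage_coe,
      Set.inter_comm]
    exact measure_inter_conull h0
  have hfin : IsFiniteMeasure (μ.comap (Subtype.val : S → E)) :=
    ⟨by
      have := hcom μ Set.univ .univ hμ0
      rw [Set.preimage_univ] at this
      rw [this]; exact measure_lt_top _ _⟩
  have hmain : μ.comap (Subtype.val : S → E) = ν.comap (Subtype.val : S → E) := by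
    refine ext_of_generate_finite G heq ?_ ?_ ?_
    · rintro _ ⟨F, hF, hF', rfl⟩ _ ⟨F2, hF2, hF2', rfl⟩ -
      exact ⟨F ∩ F2, hF.inter hF2, hF'.inter hF2', rfl⟩
    · rintro _ ⟨F, hF, hF', rfl⟩
      rw [hcom μ F hF.measurableSet hμ0, hcom ν F hF.measurableSet hν0, h F hF hF']
    · have h1 := hcom μ Set.univ .univ hμ0
      have h2 := hcom ν Set.univ .univ hν0
      rw [Set.preimage_univ] at h1 h2
      rw [h1, h2]; simp
  ext A hA
  rw [← hcom μ A hA hμ0, ← hcom ν A hA hν0, hmain]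

/-- A tight sequence converging on all Borel upper sets converges weakly. -/
lemma tendsto_of_upper {E : Type*} [TopologicalSpace E] [PolishSpace E] [MeasurableSpace E]
    [BorelSpace E] [PartialOrder E] [OrderClosedTopology E]
    (μs : ℕ → ProbabilityMeasure E) (π : ProbabilityMeasure E)
    (ht : ∀ ε : ENNReal, 0 < ε → ∃ K : Set E, IsCompact K ∧ ∀ n, (μs n : Measure E) Kᶜ ≤ ε)
    (h : ∀ I : Set E, MeasurableSet I → IsUpperSet I ∨ IsLowerSet I →
      Tendsto (fun n => (μs n : Measure E) I) atTop (𝓝 ((π : Measure E) I))) :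
    Tendsto μs atTop (𝓝 π) := by
  have hcomp : IsCompact (closure (Set.range μs)) := by
    apply isCompact_closure_of_isTightMeasureSet
    rw [isTightMeasureSet_iff_exists_isCompact_measure_compl_le]
    intro ε hε
    obtain ⟨K, hK, hK'⟩ := ht ε hε
    refine ⟨K, hK, ?_⟩
    rintro _ ⟨_, ⟨n, rfl⟩, rfl⟩
    exact hK' n
  refine hcomp.tendsto_nhds_of_unique_mapClusterPt
    (Eventually.of_forall fun n => subset_closure ⟨n, rfl⟩) ?_
  intro ν _ hν
  obtain ⟨U, hU, hUν⟩ := mapClusterPt_iff_ultrafilter.mp hν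
  have hle : ∀ F : Set E, IsClosed F → IsUpperSet F ∨ IsLowerSet F →
      (π : Measure E) F ≤ (ν : Measure E) F := by
    intro F hF hF'
    have h1 := ProbabilityMeasure.limsup_measure_closed_le_of_tendsto hUν hF
    have h2 := (h F hF.measurableSet hF').mono_left hU
    rwa [h2.limsup_eq] at h1
  apply Subtype.ext
  symm
  refine ext_of_closed_upper (π : Measure E) (ν : Measure E) fun F hF hFu => ?_
  refine le_antisymm (hle F hF (Or.inl hFu)) ?_
  have hc : (π : Measure E) Fᶜ ≤ (ν : Measure E) Fᶜ := by
    rw [hF.isOpen_compl.measurableSet.measure_eq_iSup_isCompact]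
    refine iSup₂_le fun C hC => iSup_le fun hCc => ?_
    have h3 := hle {y | ∃ c ∈ C, y ≤ c} (isClosed_down hCc)
      (Or.inr (by rintro a b hab ⟨c, hc, hca⟩; exact ⟨c, hc, hab.trans hca⟩))
    refine (measure_mono ?_).trans (h3.trans (measure_mono ?_))
    · intro c hc
      exact ⟨c, hc, le_rfl⟩
    · rintro y ⟨c, hc, hyc⟩ hyF
      exact hC hc (hFu hyc hyF)
  rw [prob_compl_eq_one_sub hF.measurableSet, prob_compl_eq_one_sub hF.measurableSet] at hc
  exact (ENNReal.sub_le_sub_iff_left prob_le_one ENNReal.one_ne_top).mp hc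

end TopPart

section MarkovPart

lemma integral_bind01 {E : Type*} [MeasurableSpace E] (P : Kernel E E) [IsMarkovKernel P]
    (m : Measure E) [IsFiniteMeasure m] (f : E → ℝ) (hf : Measurable f)
    (h0 : ∀ z, 0 ≤ f z) (h1 : ∀ z, f z ≤ 1) :
    ∫ z, f z ∂(m.bind P) = ∫ y, ∫ z, f z ∂(P y) ∂m := by
  have e : ∀ ρ : Measure E, ∫ z, f z ∂ρ = (∫⁻ z, ENNReal.ofReal (f z) ∂ρ).toReal := fun ρ =>
    integral_eq_lintegral_of_nonneg_ae (Eventually.of_forall h0) hf.aestronglyMeasurable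
  simp_rw [e]
  rw [integral_toReal, Measure.lintegral_bind P.measurable.aemeasurable
    hf.ennreal_ofReal.aemeasurable]
  · exact (Measurable.lintegral_kernel hf.ennreal_ofReal).aemeasurable
  · refine Eventually.of_forall fun y => ?_
    calc ∫⁻ z, ENNReal.ofReal (f z) ∂(P y) ≤ ∫⁻ z, 1 ∂(P y) :=
          lintegral_mono fun z => by simpa using h1 z
      _ < ⊤ := by simp

instance kpow_markov {E : Type*} [MeasurableSpace E] (P : Kernel E E) [IsMarkovKernel P] (n : ℕ) :
    IsMarkovKernel (kpow P n) := by
  induction n with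
  | zero => unfold kpow; infer_instance
  | succ n ih => unfold kpow; infer_instance

lemma kpow_succ_apply {E : Type*} [MeasurableSpace E] (P : Kernel E E) (n : ℕ) (x : E) :
    kpow P (n + 1) x = (kpow P n x).bind P := by
  rw [kpow, Kernel.comp_apply]

lemma bind_kpow {E : Type*} [MeasurableSpace E] (P : Kernel E E) [IsMarkovKernel P]
    (π : Measure E) (hstat : π.bind P = π) (n : ℕ) : π.bind (kpow P n) = π := by
  induction n with
  | zero => simp [kpow]
  | succ n ih =>
    rw [kpow, ← Measure.comp_assoc, ih, hstat]

lemma mc_restrict {E Ω : Type*} [MeasurableSpace E] [MeasurableSpace Ω] (P : Kernel E E)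
    [IsMarkovKernel P] (μ : Measure Ω) [IsProbabilityMeasure μ] (X : ℕ → Ω → E)
    (hX : ∀ n, Measurable (X n)) (h : MCStep μ (fun _ => P) X) (n : ℕ)
    (C : Set (Fin (n + 1) → E)) (hC : MeasurableSet C) :
    (μ.restrict {ω | (fun i : Fin (n + 1) => X i.1 ω) ∈ C}).map (X (n + 1))
      = ((μ.restrict {ω | (fun i : Fin (n + 1) => X i.1 ω) ∈ C}).map (X n)).bind P := by
  have hpre : MeasurableSet {ω | (fun i : Fin (n + 1) => X i.1 ω) ∈ C} := by
    have hmm : Measurable (fun ω => fun i : Fin (n + 1) => X i.1 ω) :=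
      measurable_pi_lambda _ fun i => hX i.1
    exact hmm hC
  set B := {ω | (fun i : Fin (n + 1) => X i.1 ω) ∈ C} with hB
  ext A hA
  have h1 := h n A hA (C.indicator fun _ => 1) (measurable_const.indicator hC) (by
    intro v; by_cases hv : v ∈ C <;> simp [hv])
  have hPA : Measurable fun y => P y A := P.measurable_coe hA
  rw [Measure.map_apply (hX _) hA, Measure.bind_apply hA P.measurable.aemeasurable,
    lintegral_map hPA (hX n)]
  have e1 : ∫ ω, (C.indicator (fun _ => (1 : ℝ)) fun i : Fin (n + 1) => X i.1 ω) *
      A.indicator (fun _ => (1 : ℝ)) (X (n + 1) ω) ∂μ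
      = ((μ.restrict B) (X (n + 1) ⁻¹' A)).toReal := by
    rw [Measure.restrict_apply ((hX _) hA), ← measureReal_def,
      ← integral_indicator_one (((hX _) hA).inter hpre)]
    congr 1
    ext ω
    by_cases h1 : (fun i : Fin (n + 1) => X i.1 ω) ∈ C <;> by_cases h2 : X (n + 1) ω ∈ A <;>
      simp [Set.indicator, hB, h1, h2]
  have e2 : ∫ ω, (C.indicator (fun _ => (1 : ℝ)) fun i : Fin (n + 1) => X i.1 ω) *
      (P (X n ω) A).toReal ∂μ
      = (∫⁻ ω in B, P (X n ω) A ∂μ).toReal := by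
    have hm : Measurable fun ω => P (X n ω) A := hPA.comp (hX n)
    rw [← integral_toReal hm.aemeasurable
      (Eventually.of_forall fun ω => measure_lt_top _ _), ← integral_indicator hpre]
    congr 1
    ext ω
    by_cases h1 : (fun i : Fin (n + 1) => X i.1 ω) ∈ C <;>
      simp [Set.indicator, hB, h1]
  rw [e1, e2] at h1
  refine (ENNReal.toReal_eq_toReal_iff' (measure_ne_top _ _) ?_).mp h1
  refine ne_of_lt (lt_of_le_of_lt (lintegral_mono (g := fun _ => 1) fun ω => prob_le_one) ?_)
  simp

lemma chain_law {E Ω : Type*} [MeasurableSpace E] [MeasurableSpace Ω] (P : Kernel E E)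
    [IsMarkovKernel P] (x : E) (μ : Measure Ω) (X : ℕ → Ω → E)
    (h : IsMChain P x μ X) (n : ℕ) : μ.map (X n) = kpow P n x := by
  obtain ⟨hμ, hX, h0, hs⟩ := h
  induction n with
  | zero =>
    rw [kpow, Kernel.id_apply, Measure.map_congr (g := fun _ => x) h0, Measure.map_const]
    simp
  | succ n ih =>
    have := mc_restrict P μ X hX hs n Set.univ .univ
    simp only [Set.mem_univ, Set.setOf_true, Measure.restrict_univ] at this
    rw [this, ih, kpow_succ_apply]

/-- A bounded sub-harmonic function which a.s. hits zero along the chain vanishes. -/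
lemma subharm_zero {E Ω : Type*} [MeasurableSpace E] [MeasurableSpace Ω] (P : Kernel E E)
    [IsMarkovKernel P] (x : E) (μ : Measure Ω) (X : ℕ → Ω → E)
    (h : IsMChain P x μ X) (u : E → ENNReal) (hu : Measurable u) (hu1 : ∀ z, u z ≤ 1)
    (hsub : ∀ z, u z ≤ ∫⁻ y, u y ∂(P z)) (hhit : ∀ᵐ ω ∂μ, ∃ k, u (X k ω) = 0) : u x = 0 := by
  obtain ⟨hμ, hX, h0, hs⟩ := h
  let C : ∀ n, Set (Fin (n + 1) → E) := fun n => {v | ∀ i, u (v i) ≠ 0}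
  have hC : ∀ n, MeasurableSet (C n) := fun n => by
    have : C n = ⋂ i, {v | u (v i) ≠ 0} := by ext v; simp [C]
    rw [this]
    exact MeasurableSet.iInter fun i =>
      (hu.comp (measurable_pi_apply i)) (measurableSet_singleton (0 : ENNReal)).compl
  let B : ℕ → Set Ω := fun n => {ω | (fun i : Fin (n + 1) => X i.1 ω) ∈ C n}
  have hBm : ∀ n, MeasurableSet (B n) := fun n =>
    (measurable_pi_lambda _ fun i : Fin (n + 1) => hX i.1) (hC n)
  have hBmem : ∀ n ω, ω ∈ B n ↔ ∀ i ≤ n, u (X i ω) ≠ 0 := by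
    intro n ω
    constructor
    · intro hω i hi
      exact hω ⟨i, by omega⟩
    · intro hω i
      exact hω i.1 (by omega)
  have hstep : ∀ n, ∫⁻ ω in B n, u (X n ω) ∂μ ≤ ∫⁻ ω in B (n + 1), u (X (n + 1) ω) ∂μ := by
    intro n
    calc ∫⁻ ω in B n, u (X n ω) ∂μ ≤ ∫⁻ ω in B n, ∫⁻ y, u y ∂(P (X n ω)) ∂μ :=
          lintegral_mono fun ω => hsub _
      _ = ∫⁻ y, u y ∂(((μ.restrict (B n)).map (X n)).bind P) := by
          rw [Measure.lintegral_bind P.measurable.aemeasurable hu.aemeasurable,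
            lintegral_map (Measurable.lintegral_kernel hu) (hX n)]
      _ = ∫⁻ y, u y ∂((μ.restrict (B n)).map (X (n + 1))) := by
          rw [mc_restrict P μ X hX hs n (C n) (hC n)]
      _ = ∫⁻ ω in B n, u (X (n + 1) ω) ∂μ := lintegral_map hu (hX _)
      _ = ∫⁻ ω in B (n + 1), u (X (n + 1) ω) ∂μ := by
          rw [← lintegral_indicator (hBm n), ← lintegral_indicator (hBm (n + 1))]
          congr 1
          ext ω
          by_cases h2 : u (X (n + 1) ω) = 0
          · simp [Set.indicator, h2]
          · have : ω ∈ B n ↔ ω ∈ B (n + 1) := by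
              rw [hBmem, hBmem]
              constructor
              · intro hω i hi
                rcases Nat.lt_or_ge n i with hlt | hge
                · obtain rfl : i = n + 1 := by omega
                  exact h2
                · exact hω i hge
              · intro hω i hi
                exact hω i (by omega)
            simp [Set.indicator, this]
  have hmon : Monotone fun n => ∫⁻ ω in B n, u (X n ω) ∂μ := monotone_nat_of_le_succ hstep
  have hzero : u x = ∫⁻ ω in B 0, u (X 0 ω) ∂μ := by
    rw [← lintegral_indicator (hBm 0)]
    have : (B 0).indicator (fun ω => u (X 0 ω)) =ᵐ[μ] fun _ => u x := by
      filter_upwards [h0] with ω hω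
      by_cases h2 : u x = 0
      · simp [Set.indicator, hω, h2]
      · have : ω ∈ B 0 := by
          rw [hBmem]; intro i hi
          obtain rfl : i = 0 := by omega
          rwa [hω]
        simp [Set.indicator, this, hω]
    rw [lintegral_congr_ae this]; simp
  have hle : ∀ n, u x ≤ μ (B n) := by
    intro n
    calc u x ≤ ∫⁻ ω in B n, u (X n ω) ∂μ := hzero.le.trans (hmon (Nat.zero_le n))
      _ ≤ ∫⁻ ω in B n, 1 ∂μ := lintegral_mono fun ω => hu1 _
      _ = μ (B n) := by simp
  have hanti : Antitone B := by
    intro a b hab ω hω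
    rw [hBmem] at hω ⊢
    exact fun i hi => hω i (hi.trans hab)
  have hlim := tendsto_measure_iInter_atTop (μ := μ) (fun n => (hBm n).nullMeasurableSet) hanti
    ⟨0, measure_ne_top _ _⟩
  have hnull : μ (⋂ n, B n) = 0 := by
    refine measure_mono_null ?_ (ae_iff.mp hhit)
    intro ω hω
    rw [Set.mem_iInter] at hω
    rintro ⟨k, hk⟩
    exact (hBmem k ω).mp (hω k) k le_rfl hk
  rw [hnull] at hlim
  exact le_antisymm (ge_of_tendsto' hlim hle) zero_le

/-- One step of the stationary chain: `f n (Y₁) - f (n+1) (Y₀) → 0` a.s. -/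
lemma one_step {E : Type*} [MeasurableSpace E]
    (P : Kernel E E) [IsMarkovKernel P] (π : Measure E) [IsProbabilityMeasure π]
    (hstat : π.bind P = π) (f : ℕ → E → ℝ) (hf : ∀ n, Measurable (f n))
    (h0 : ∀ n z, 0 ≤ f n z) (h1 : ∀ n z, f n z ≤ 1)
    (hrec : ∀ n z, f (n + 1) z = ∫ y, f n y ∂(P z)) :
    ∀ᵐ y ∂π, ∀ᵐ z ∂(P y), Tendsto (fun n => f n z - f (n + 1) y) atTop (𝓝 0) := by
  let V : ℕ → ℝ := fun n => ∫ z, f n z ^ 2 ∂π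
  have hint : ∀ (ρ : Measure E) [IsProbabilityMeasure ρ] (n : ℕ), Integrable (f n) ρ := by
    intro ρ _ n
    exact Integrable.of_bound (hf n).aestronglyMeasurable 1 (Eventually.of_forall fun z => by
      rw [Real.norm_eq_abs, abs_of_nonneg (h0 n z)]; exact h1 n z)
  have hsq0 : ∀ n z, 0 ≤ f n z ^ 2 := fun n z => sq_nonneg _
  have hsq1 : ∀ n z, f n z ^ 2 ≤ 1 := fun n z => pow_le_one₀ (h0 n z) (h1 n z)
  have hint2 : ∀ (ρ : Measure E) [IsProbabilityMeasure ρ] (n : ℕ),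
      Integrable (fun z => f n z ^ 2) ρ := by
    intro ρ _ n
    exact Integrable.of_bound ((hf n).pow_const 2).aestronglyMeasurable 1
      (Eventually.of_forall fun z => by
        rw [Real.norm_eq_abs, abs_of_nonneg (hsq0 n z)]; exact hsq1 n z)
  have hexp : ∀ n y, ∫ z, (f n z - f (n + 1) y) ^ 2 ∂(P y)
      = ∫ z, f n z ^ 2 ∂(P y) - f (n + 1) y ^ 2 := by
    intro n y
    have e : (fun z => (f n z - f (n + 1) y) ^ 2)
          = fun z => f n z ^ 2 - 2 * f (n + 1) y * f n z + f (n + 1) y ^ 2 := by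
        ext z; ring
    have hA : Integrable (fun z => f n z ^ 2 - 2 * f (n + 1) y * f n z) (P y) :=
      (hint2 _ n).sub ((hint _ n).const_mul _)
    rw [e, integral_add hA (integrable_const _),
      integral_sub (hint2 _ n) ((hint _ n).const_mul _), integral_const_mul, ← hrec]
    simp
    ring
  have hinner : ∀ n y, ∫⁻ z, ENNReal.ofReal ((f n z - f (n + 1) y) ^ 2) ∂(P y)
      = ENNReal.ofReal (∫ z, f n z ^ 2 ∂(P y) - f (n + 1) y ^ 2) := by
    intro n y
    have hi : Integrable (fun z => (f n z - f (n + 1) y) ^ 2) (P y) := by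
      have : (fun z => (f n z - f (n + 1) y) ^ 2)
          = fun z => f n z ^ 2 - 2 * f (n + 1) y * f n z + f (n + 1) y ^ 2 := by
        ext z; ring
      rw [this]
      exact ((hint2 _ n).sub ((hint _ n).const_mul _)).add (integrable_const _)
    rw [← ofReal_integral_eq_lintegral_ofReal hi (Eventually.of_forall fun z => sq_nonneg _)]
    rw [hexp]
  have hmeasI : ∀ n, Measurable fun y => ∫ z, f n z ^ 2 ∂(P y) := fun n =>
    (StronglyMeasurable.integral_kernel ((hf n).pow_const 2).stronglyMeasurable).measurable
  have hI0 : ∀ n y, 0 ≤ ∫ z, f n z ^ 2 ∂(P y) := fun n y => integral_nonneg (hsq0 n)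
  have hI1 : ∀ n y, ∫ z, f n z ^ 2 ∂(P y) ≤ 1 := fun n y => by
    calc ∫ z, f n z ^ 2 ∂(P y) ≤ ∫ z, 1 ∂(P y) :=
          integral_mono (hint2 _ n) (integrable_const _) (hsq1 n)
      _ = 1 := by simp
  have hIint : ∀ n, Integrable (fun y => ∫ z, f n z ^ 2 ∂(P y)) π := fun n =>
    Integrable.of_bound (hmeasI n).aestronglyMeasurable 1 (Eventually.of_forall fun z => by
      rw [Real.norm_eq_abs, abs_of_nonneg (hI0 n z)]; exact hI1 n z)
  have hpos : ∀ n y, 0 ≤ ∫ z, f n z ^ 2 ∂(P y) - f (n + 1) y ^ 2 := by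
    intro n y
    have hi : 0 ≤ ∫ z, (f n z - f (n + 1) y) ^ 2 ∂(P y) := integral_nonneg fun z => sq_nonneg _
    rwa [hexp] at hi
  have hIs : ∀ n, Integrable (fun y => ∫ z, f n z ^ 2 ∂(P y) - f (n + 1) y ^ 2) π := fun n =>
    (hIint n).sub (hint2 π (n + 1))
  have houter : ∀ n, ∫⁻ y, ∫⁻ z, ENNReal.ofReal ((f n z - f (n + 1) y) ^ 2) ∂(P y) ∂π
      = ENNReal.ofReal (V n - V (n + 1)) := by
    intro n
    simp_rw [hinner]
    rw [← ofReal_integral_eq_lintegral_ofReal (hIs n)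
      (Eventually.of_forall (hpos n)), integral_sub (hIint n) (hint2 π (n + 1)),
      ← integral_bind01 P π _ ((hf n).pow_const 2) (hsq0 n) (hsq1 n), hstat]
  have hVanti : ∀ n, 0 ≤ V n - V (n + 1) := by
    intro n
    have := integral_nonneg (μ := π)
      (f := fun y => ∫ z, f n z ^ 2 ∂(P y) - f (n + 1) y ^ 2) (hpos n)
    rwa [integral_sub (hIint n) (hint2 π (n + 1)),
      ← integral_bind01 P π _ ((hf n).pow_const 2) (hsq0 n) (hsq1 n), hstat] at this
  have hV0 : ∀ n, 0 ≤ V n := fun n => integral_nonneg (hsq0 n)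
  have hV1 : V 0 ≤ 1 := by
    calc ∫ z, f 0 z ^ 2 ∂π ≤ ∫ z, 1 ∂π :=
          integral_mono (hint2 _ 0) (integrable_const _) (hsq1 0)
      _ = 1 := by simp
  have hm : ∀ n, Measurable fun p : E × E => ENNReal.ofReal ((f n p.2 - f (n + 1) p.1) ^ 2) := by
    intro n
    exact ((((hf n).comp measurable_snd).sub ((hf (n + 1)).comp measurable_fst)).pow_const 2).ennreal_ofReal
  have hm1 : ∀ n y, Measurable fun z => ENNReal.ofReal ((f n z - f (n + 1) y) ^ 2) := by
    intro n y
    exact (((hf n).sub_const _).pow_const 2).ennreal_ofReal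
  have htot : ∫⁻ y, ∫⁻ z, ∑' n, ENNReal.ofReal ((f n z - f (n + 1) y) ^ 2) ∂(P y) ∂π ≠ ⊤ := by
    have e : ∀ y, ∫⁻ z, ∑' n, ENNReal.ofReal ((f n z - f (n + 1) y) ^ 2) ∂(P y)
        = ∑' n, ∫⁻ z, ENNReal.ofReal ((f n z - f (n + 1) y) ^ 2) ∂(P y) := fun y =>
      lintegral_tsum fun n => (hm1 n y).aemeasurable
    simp_rw [e]
    rw [lintegral_tsum fun n => (Measurable.lintegral_kernel_prod_right' (hm n)).aemeasurable]
    simp_rw [houter]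
    refine ne_of_lt (lt_of_le_of_lt (ENNReal.tsum_le_of_sum_range_le (c := 1) fun N => ?_)
      ENNReal.one_lt_top)
    rw [← ENNReal.ofReal_sum_of_nonneg fun i _ => hVanti i, Finset.sum_range_sub']
    rw [ENNReal.ofReal_le_one]
    linarith [hV0 N]
  have hae := ae_lt_top (Measurable.lintegral_kernel_prod_right' (κ := P)
    (Measurable.ennreal_tsum hm)) htot
  filter_upwards [hae] with y hy
  have hae2 := ae_lt_top (Measurable.ennreal_tsum fun n => hm1 n y) hy.ne
  filter_upwards [hae2] with z hz
  have ht := ENNReal.tendsto_atTop_zero_of_tsum_ne_top hz.ne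
  have ht2 : Tendsto (fun n => (f n z - f (n + 1) y) ^ 2) atTop (𝓝 0) := by
    have := (ENNReal.tendsto_toReal ENNReal.zero_ne_top).comp ht
    refine this.congr fun n => ?_
    simp [ENNReal.toReal_ofReal (sq_nonneg _)]
  have ht3 := ht2.sqrt
  simp only [Real.sqrt_sq_eq_abs, Real.sqrt_zero] at ht3
  exact (tendsto_zero_iff_abs_tendsto_zero _).mpr ht3

lemma k_step {E : Type*} [MeasurableSpace E] [MeasurableSingletonClass E]
    (P : Kernel E E) [IsMarkovKernel P] (π : Measure E) [IsProbabilityMeasure π]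
    (hstat : π.bind P = π) (f : ℕ → E → ℝ) (hf : ∀ n, Measurable (f n))
    (h0 : ∀ n z, 0 ≤ f n z) (h1 : ∀ n z, f n z ≤ 1)
    (hrec : ∀ n z, f (n + 1) z = ∫ y, f n y ∂(P z)) (k : ℕ) :
    ∀ᵐ y ∂π, ∀ᵐ z ∂(kpow P k y), Tendsto (fun n => f n z - f (n + k) y) atTop (𝓝 0) := by
  induction k with
  | zero =>
    refine Eventually.of_forall fun y => ?_
    rw [kpow, Kernel.id_apply, ae_dirac_eq]
    simp
  | succ k ih =>
    have hone := one_step P π hstat f hf h0 h1 hrec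
    rw [← bind_kpow P π hstat k] at hone
    have hone' := Measure.ae_ae_of_ae_comp hone
    filter_upwards [ih, hone'] with y hy hy'
    rw [kpow_succ_apply]
    refine Measure.ae_comp_of_ae_ae
      (measurableSet_tendsto (𝓝 0) fun n => (hf n).sub_const _) ?_
    filter_upwards [hy, hy'] with y1 ha hb
    filter_upwards [hb] with z hz
    have := hz.add (ha.comp (tendsto_add_atTop_nat 1))
    rw [add_zero] at this
    refine this.congr fun n => ?_
    simp only [Function.comp]
    rw [show n + 1 + k = n + (k + 1) by ring]
    ring

/-- The key convergence lemma. -/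
lemma key_conv {E : Type*} [MeasurableSpace E] [MeasurableSingletonClass E]
    (P : Kernel E E) [IsMarkovKernel P] (π : Measure E) [IsProbabilityMeasure π]
    (hstat : π.bind P = π) (f : ℕ → E → ℝ) (hf : ∀ n, Measurable (f n))
    (h0 : ∀ n z, 0 ≤ f n z) (h1 : ∀ n z, f n z ≤ 1)
    (hrec : ∀ n z, f (n + 1) z = ∫ y, f n y ∂(P z))
    (hc : ∀ z y : E, ∃ (Ω : Type) (_ : MeasurableSpace Ω) (μ : Measure Ω) (Z Y : ℕ → Ω → E),
      IsMChain P z μ Z ∧ IsMChain P y μ Y ∧ ∀ᵐ ω ∂μ, ∃ k, ∀ n, f n (Z k ω) ≤ f n (Y k ω))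
    (z : E) :
    Tendsto (fun n => ENNReal.ofReal (f n z - ∫ y, f 0 y ∂π)) atTop (𝓝 0) := by
  set c := ∫ y, f 0 y ∂π with hcdef
  have hint : ∀ (ρ : Measure E) [IsProbabilityMeasure ρ] (n : ℕ), Integrable (f n) ρ := by
    intro ρ _ n
    exact Integrable.of_bound (hf n).aestronglyMeasurable 1 (Eventually.of_forall fun z => by
      rw [Real.norm_eq_abs, abs_of_nonneg (h0 n z)]; exact h1 n z)
  have hcn : ∀ n, ∫ y, f n y ∂π = c := by
    intro n
    induction n with
    | zero => rfl
    | succ n ih =>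
      simp_rw [hrec n]
      rw [← integral_bind01 P π _ (hf n) (h0 n) (h1 n), hstat, ih]
  have hc0 : 0 ≤ c := integral_nonneg (h0 0)
  -- good points
  have hgood : ∀ᵐ y ∂π, ∀ k, ∀ᵐ z ∂(kpow P k y),
      Tendsto (fun n => f n z - f (n + k) y) atTop (𝓝 0) :=
    ae_all_iff.mpr fun k => k_step P π hstat f hf h0 h1 hrec k
  have htrans : ∀ (x : E) (Ω : Type) (_ : MeasurableSpace Ω) (μ : Measure Ω) (X : ℕ → Ω → E)
      (_ : IsMChain P x μ X) (p : ℕ → E → Prop) (_ : ∀ k, ∀ᵐ z ∂(kpow P k x), p k z),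
      ∀ᵐ ω ∂μ, ∀ k, p k (X k ω) := by
    intro x Ω _ μ X hX p hp
    refine ae_all_iff.mpr fun k => ?_
    have := hp k
    rw [← chain_law P x μ X hX k] at this
    exact ae_of_ae_map (hX.2.1 k).aemeasurable this
  have hpair : ∀ y y', (∀ k, ∀ᵐ z ∂(kpow P k y),
      Tendsto (fun n => f n z - f (n + k) y) atTop (𝓝 0)) → (∀ k, ∀ᵐ z ∂(kpow P k y'),
      Tendsto (fun n => f n z - f (n + k) y') atTop (𝓝 0)) →
      Tendsto (fun n => max (f n y - f n y') 0) atTop (𝓝 0) := by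
    intro y y' hy hy'
    obtain ⟨Ω, _, μ, Z, Y, hZ, hY, hZY⟩ := hc y y'
    have hμ := hZ.1
    obtain ⟨ω, ⟨⟨k, hk⟩, hωZ⟩, hωY⟩ := ((hZY.and (htrans y Ω _ μ Z hZ _ hy)).and
      (htrans y' Ω _ μ Y hY _ hy')).exists
    rw [← tendsto_add_atTop_iff_nat k]
    have hd := (hωY k).sub (hωZ k)
    have hd' := hd.max (tendsto_const_nhds (x := (0 : ℝ)))
    simp only [sub_zero, max_self] at hd'
    refine squeeze_zero (fun n => le_max_right _ _) (fun n => ?_) hd'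
    refine max_le_max ?_ le_rfl
    have := hk n
    linarith
  have hlow : ∀ᵐ y ∂π, Tendsto (fun n => ENNReal.ofReal (f n y - c)) atTop (𝓝 0) := by
    filter_upwards [hgood] with y hy
    have hdct : Tendsto (fun n => ∫ y', max (f n y - f n y') 0 ∂π) atTop (𝓝 (∫ _, (0 : ℝ) ∂π)) := by
      refine tendsto_integral_of_dominated_convergence (fun _ => 1) ?_ (integrable_const _) ?_ ?_
      · intro n
        exact ((measurable_const.sub (hf n)).max measurable_const).aestronglyMeasurable
      · intro n
        refine Eventually.of_forall fun y' => ?_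
        rw [Real.norm_eq_abs, abs_of_nonneg (le_max_right _ _)]
        exact max_le (by linarith [h1 n y, h0 n y']) zero_le_one
      · filter_upwards [hgood] with y' hy'
        exact hpair y y' hy hy'
    rw [integral_zero] at hdct
    have hdct' := ENNReal.tendsto_ofReal hdct
    rw [ENNReal.ofReal_zero] at hdct'
    refine tendsto_of_tendsto_of_tendsto_of_le_of_le tendsto_const_nhds hdct'
      (fun n => zero_le) (fun n => ENNReal.ofReal_le_ofReal ?_)
    have e : f n y - c = ∫ y', (f n y - f n y') ∂π := by
      rw [integral_sub (integrable_const _) (hint π n), hcn]; simp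
    rw [e]
    have hi : Integrable (fun y' => f n y - f n y') π := (integrable_const _).sub (hint π n)
    exact integral_mono hi hi.pos_part fun y' => le_max_left _ _
  -- the sub-harmonic function
  let u : E → ENNReal := fun y => limsup (fun n => ENNReal.ofReal (f n y - c)) atTop
  have hvm : ∀ n, Measurable fun y => ENNReal.ofReal (f n y - c) := fun n =>
    ((hf n).sub_const _).ennreal_ofReal
  have hv1 : ∀ n y, ENNReal.ofReal (f n y - c) ≤ 1 := fun n y => by
    rw [ENNReal.ofReal_le_one]; linarith [h1 n y]
  have hum : Measurable u := Measurable.limsup hvm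
  have hu1 : ∀ y, u y ≤ 1 := fun y =>
    limsup_le_of_le (h := Eventually.of_forall fun n => hv1 n y)
  have husub : ∀ y, u y ≤ ∫⁻ w, u w ∂(P y) := by
    intro y
    have hl := limsup_lintegral_le (μ := P y) (f := fun n w => ENNReal.ofReal (f n w - c))
      (fun _ => 1) hvm (fun n => Eventually.of_forall (hv1 n)) (by simp)
    refine le_trans ?_ hl
    have e : u y = limsup (fun n => ENNReal.ofReal (f (n + 1) y - c)) atTop :=
      (limsup_nat_add (fun n => ENNReal.ofReal (f n y - c)) 1).symm
    rw [e]
    refine limsup_le_limsup (Eventually.of_forall fun n => ?_)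
    have hi : Integrable (fun w => f n w - c) (P y) := (hint _ n).sub (integrable_const _)
    have e2 : f (n + 1) y - c = ∫ w, (f n w - c) ∂(P y) := by
      rw [integral_sub (hint _ n) (integrable_const _), ← hrec]; simp
    calc ENNReal.ofReal (f (n + 1) y - c) ≤ ENNReal.ofReal (∫ w, max (f n w - c) 0 ∂(P y)) := by
          rw [e2]
          exact ENNReal.ofReal_le_ofReal (integral_mono hi hi.pos_part fun w => le_max_left _ _)
      _ = ∫⁻ w, ENNReal.ofReal (max (f n w - c) 0) ∂(P y) :=
          ofReal_integral_eq_lintegral_ofReal hi.pos_part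
            (Eventually.of_forall fun w => le_max_right _ _)
      _ = ∫⁻ w, ENNReal.ofReal (f n w - c) ∂(P y) := by
          congr 1; ext w; simp [ENNReal.ofReal_max]
  have hu0 : ∀ᵐ y ∂π, u y = 0 := by
    filter_upwards [hlow] with y hy
    exact hy.limsup_eq
  have hu0k : ∀ᵐ y ∂π, ∀ k, ∀ᵐ w ∂(kpow P k y), u w = 0 := by
    refine ae_all_iff.mpr fun k => ?_
    rw [← bind_kpow P π hstat k] at hu0
    exact Measure.ae_ae_of_ae_comp hu0
  obtain ⟨y, hy⟩ := hu0k.exists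
  obtain ⟨Ω, _, μ, Z, Y, hZ, hY, hZY⟩ := hc z y
  have huz : u z = 0 := by
    refine subharm_zero P z μ Z hZ u hum hu1 husub ?_
    filter_upwards [hZY, htrans y Ω _ μ Y hY _ hy] with ω hω hω'
    obtain ⟨k, hk⟩ := hω
    refine ⟨k, le_antisymm ?_ zero_le⟩
    rw [← hω' k]
    exact limsup_le_limsup (Eventually.of_forall fun n =>
      ENNReal.ofReal_le_ofReal (sub_le_sub_right (hk n) c))
  exact tendsto_of_le_liminf_of_limsup_le zero_le huz.le

end MarkovPart

section FinalPart

/-- The iterates of a function under the kernel. -/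
noncomputable def iterFun {E : Type*} [MeasurableSpace E] (P : Kernel E E) (g : E → ℝ) :
    ℕ → E → ℝ
  | 0 => g
  | n + 1 => fun z => ∫ y, iterFun P g n y ∂(P z)

lemma iterFun_meas {E : Type*} [MeasurableSpace E] (P : Kernel E E) [IsMarkovKernel P]
    (g : E → ℝ) (hg : Measurable g) (n : ℕ) : Measurable (iterFun P g n) := by
  induction n with
  | zero => exact hg
  | succ n ih => exact (StronglyMeasurable.integral_kernel ih.stronglyMeasurable).measurable

lemma integrable01 {E : Type*} [MeasurableSpace E] (ρ : Measure E) [IsProbabilityMeasure ρ]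
    (g : E → ℝ) (hg : Measurable g) (h : ∀ z, g z ∈ Set.Icc (0 : ℝ) 1) : Integrable g ρ :=
  Integrable.of_bound hg.aestronglyMeasurable 1 (Eventually.of_forall fun z => by
    rw [Real.norm_eq_abs, abs_of_nonneg (h z).1]; exact (h z).2)

lemma iterFun_mem {E : Type*} [MeasurableSpace E] (P : Kernel E E) [IsMarkovKernel P]
    (g : E → ℝ) (hg : Measurable g) (h : ∀ z, g z ∈ Set.Icc (0 : ℝ) 1) (n : ℕ) :
    ∀ z, iterFun P g n z ∈ Set.Icc (0 : ℝ) 1 := by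
  induction n with
  | zero => exact h
  | succ n ih =>
    intro z
    refine ⟨integral_nonneg fun y => (ih y).1, ?_⟩
    calc ∫ y, iterFun P g n y ∂(P z) ≤ ∫ y, 1 ∂(P z) :=
          integral_mono (integrable01 _ _ (iterFun_meas P g hg n) ih) (integrable_const _)
            fun y => (ih y).2
      _ = 1 := by simp

lemma iterFun_mono {E : Type*} [MeasurableSpace E] [Preorder E] (P : Kernel E E)
    [IsMarkovKernel P] (hmono : MonotoneKernel P)
    (g : E → ℝ) (hg : Measurable g) (h : ∀ z, g z ∈ Set.Icc (0 : ℝ) 1) (hm : Monotone g)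
    (n : ℕ) : Monotone (iterFun P g n) := by
  induction n with
  | zero => exact hm
  | succ n ih => exact hmono _ (iterFun_meas P g hg n) ih (iterFun_mem P g hg h n)

lemma iterFun_kpow {E : Type*} [MeasurableSpace E] [MeasurableSingletonClass E]
    (P : Kernel E E) [IsMarkovKernel P]
    (g : E → ℝ) (hg : Measurable g) (h : ∀ z, g z ∈ Set.Icc (0 : ℝ) 1) (z : E) (n : ℕ) :
    iterFun P g n z = ∫ y, g y ∂(kpow P n z) := by
  have key : ∀ n m, ∫ y, iterFun P g n y ∂(kpow P m z) = ∫ y, g y ∂(kpow P (m + n) z) := by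
    intro n
    induction n with
    | zero => intro m; rfl
    | succ n ih =>
      intro m
      rw [show m + (n + 1) = (m + 1) + n by ring, ← ih, kpow_succ_apply,
        integral_bind01 P _ _ (iterFun_meas P g hg n) (fun y => (iterFun_mem P g hg h n y).1)
          (fun y => (iterFun_mem P g hg h n y).2)]
      rfl
  have := key n 0
  rw [zero_add] at this
  rw [← this, kpow, Kernel.id_apply, integral_dirac]

lemma upper_conv {E : Type*} [MeasurableSpace E] [MeasurableSingletonClass E] [Preorder E]
    (P : Kernel E E) [IsMarkovKernel P] (hmono : MonotoneKernel P)
    (hach : Achievable P {p : E × E | p.1 ≤ p.2})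
    (π : Measure E) [IsProbabilityMeasure π] (hstat : π.bind P = π)
    (x : E) (g : E → ℝ) (hg : Measurable g) (h : ∀ z, g z ∈ Set.Icc (0 : ℝ) 1)
    (hm : Monotone g) :
    Tendsto (fun n => ∫ y, g y ∂(kpow P n x)) atTop (𝓝 (∫ y, g y ∂π)) := by
  have hme := iterFun_meas P g hg
  have hmem := iterFun_mem P g hg h
  have hmon := iterFun_mono P hmono g hg h hm
  have c1 := key_conv P π hstat (iterFun P g) hme (fun n z => (hmem n z).1)
    (fun n z => (hmem n z).2) (fun n z => rfl) (by
      intro z y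
      obtain ⟨Ω, _, μ, Z, Y, ⟨hZ, hY, -⟩, hae⟩ := hach z y
      refine ⟨Ω, _, μ, Z, Y, hZ, hY, ?_⟩
      filter_upwards [hae] with ω hω
      obtain ⟨k, hk⟩ := hω
      exact ⟨k, fun n => hmon n hk⟩) x
  have c2 := key_conv P π hstat (fun n z => 1 - iterFun P g n z)
    (fun n => measurable_const.sub (hme n)) (fun n z => sub_nonneg.mpr (hmem n z).2)
    (fun n z => sub_le_self _ (hmem n z).1) (fun n z => by
      rw [integral_sub (integrable_const _) (integrable01 _ _ (hme n) (hmem n))]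
      simp [iterFun]) (by
      intro z y
      obtain ⟨Ω, _, μ, Y, Z, ⟨hY, hZ, -⟩, hae⟩ := hach y z
      refine ⟨Ω, _, μ, Z, Y, hZ, hY, ?_⟩
      filter_upwards [hae] with ω hω
      obtain ⟨k, hk⟩ := hω
      exact ⟨k, fun n => sub_le_sub_left (hmon n hk) 1⟩) x
  have e2 : ∫ y, (1 - iterFun P g 0 y) ∂π = 1 - ∫ y, g y ∂π := by
    rw [integral_sub (integrable_const _) (integrable01 _ _ (hme 0) (hmem 0))]
    simp [iterFun]
  simp only [e2] at c2
  have d1 := (ENNReal.tendsto_toReal ENNReal.zero_ne_top).comp c1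
  have d2 := (ENNReal.tendsto_toReal ENNReal.zero_ne_top).comp c2
  have d3 := (d1.sub d2).add_const (∫ y, g y ∂π)
  simp only [ENNReal.toReal_zero, sub_zero, zero_add] at d3
  refine d3.congr fun n => ?_
  rw [← iterFun_kpow P g hg h x n]
  simp only [Function.comp, ENNReal.toReal_ofReal', iterFun]
  rcases le_total (iterFun P g n x) (∫ y, g y ∂π) with h' | h'
  · rw [max_eq_right (by linarith), max_eq_left (by linarith)]; ring
  · rw [max_eq_left (by linarith), max_eq_right (by linarith)]; ring

lemma upperset_conv {E : Type*} [MeasurableSpace E] [MeasurableSingletonClass E] [Preorder E]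
    (P : Kernel E E) [IsMarkovKernel P] (hmono : MonotoneKernel P)
    (hach : Achievable P {p : E × E | p.1 ≤ p.2})
    (π : Measure E) [IsProbabilityMeasure π] (hstat : π.bind P = π)
    (x : E) (I : Set E) (hI : MeasurableSet I) (hu : IsUpperSet I) :
    Tendsto (fun n => kpow P n x I) atTop (𝓝 (π I)) := by
  have := upper_conv P hmono hach π hstat x (I.indicator 1) (measurable_one.indicator hI)
    (by intro z; by_cases hz : z ∈ I <;> simp [hz])
    (by
      intro a b hab
      by_cases ha : a ∈ I
      · have hb := hu hab ha
        simp [ha, hb]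
      · by_cases hb : b ∈ I <;> simp [ha, hb])
  simp only [integral_indicator_one hI, measureReal_def] at this
  exact (ENNReal.tendsto_toReal_iff (fun n => measure_ne_top _ _) (measure_ne_top _ _)).mp this

lemma set_conv {E : Type*} [MeasurableSpace E] [MeasurableSingletonClass E] [Preorder E]
    (P : Kernel E E) [IsMarkovKernel P] (hmono : MonotoneKernel P)
    (hach : Achievable P {p : E × E | p.1 ≤ p.2})
    (π : Measure E) [IsProbabilityMeasure π] (hstat : π.bind P = π)
    (x : E) (I : Set E) (hI : MeasurableSet I) (hu : IsUpperSet I ∨ IsLowerSet I) :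
    Tendsto (fun n => kpow P n x I) atTop (𝓝 (π I)) := by
  rcases hu with hu | hl
  · exact upperset_conv P hmono hach π hstat x I hI hu
  · have := upperset_conv P hmono hach π hstat x Iᶜ hI.compl hl.compl
    have h2 := ENNReal.Tendsto.sub (tendsto_const_nhds (x := (1 : ENNReal))) this
      (Or.inl ENNReal.one_ne_top)
    have e : ∀ (ρ : Measure E) [IsProbabilityMeasure ρ], 1 - ρ Iᶜ = ρ I := by
      intro ρ _
      rw [← prob_compl_eq_one_sub hI.compl, compl_compl]
    simpa only [e] using h2

end FinalPart

/-- Theorem 3.4 iv: if `M` is achievable for the monotone kernel `P`, a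
stationary distribution `π` exists and for some `x` the laws of `Xₙˣ`, `n ≥ 0`, are tight,
then these laws converge weakly to `π`. -/
theorem stmt10 {E : Type*} [MetricSpace E] [PolishSpace E] [MeasurableSpace E] [BorelSpace E]
    [PartialOrder E] [OrderClosedTopology E]
    (P : Kernel E E) [IsMarkovKernel P] (hmono : MonotoneKernel P)
    (hach : Achievable P {p : E × E | p.1 ≤ p.2})
    (π : Measure E) [IsProbabilityMeasure π] (hstat : π.bind (fun a => P a) = π)
    (x : E)
    (htight : ∀ ε : ENNReal, 0 < ε → ∃ K : Set E, IsCompact K ∧ ∀ n, (kpow P n x) Kᶜ ≤ ε) :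
    ∀ g : BoundedContinuousFunction E ℝ,
      Tendsto (fun n => ∫ z, g z ∂(kpow P n x)) atTop (nhds (∫ z, g z ∂π)) := by
  intro g
  have h := tendsto_of_upper (fun n => (⟨kpow P n x, inferInstance⟩ : ProbabilityMeasure E))
    ⟨π, inferInstance⟩ htight (fun I hI hu => set_conv P hmono hach π hstat x I hI hu)
  exact ProbabilityMeasure.tendsto_iff_forall_integral_tendsto.mp h g
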